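/- Let G₁,…,G_k be graphs that are pairwise consistent, and let r̄₁,…,r̄_k be rotation sequences that are pairwise consistent (i.e., whenever two of them act upon a common vertex u, the compositions (r̄_i/u) of their rotations at u coincide), such that the rotated graphs r̄₁G₁,…,r̄_kG_k are also pairwise consistent. Then there exists a rotation sequence r̄ such that ⋃_{i=1}^{k} r̄_i G_i = r̄ (⋃_{i=1}^{k} G_i). -/

import Mathlib

namespace CDDM

open Equiv Set

/-- The set of ports `π = {0,…,n+1}`. -/
abbrev Port (n : ℕ) := Fin (n + 2)

/-- Gluings are the odd permutations of the ports. -/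
def IsGluing {n : ℕ} (γ : Equiv.Perm (Port n)) : Prop := Equiv.Perm.sign γ = -1

/-- Rotations are the even permutations of the ports. -/
def IsRotation {n : ℕ} (r : Equiv.Perm (Port n)) : Prop := Equiv.Perm.sign r = 1

/-- An (oriented) edge `(u:p, γ, v:q)`. -/
@[ext] structure Edge (n : ℕ) (α : Type) where
  u : α
  p : Port n
  γ : Equiv.Perm (Port n)
  v : α
  q : Port n

/-- The inverse edge `(v:q, γ⁻¹, u:p)`. -/
def Edge.inv {n : ℕ} {α : Type} (e : Edge n α) : Edge n α := ⟨e.v, e.q, e.γ⁻¹, e.u, e.p⟩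

/-- Raw data of a graph: vertices, semi-edges and edges. -/
@[ext] structure RawGraph (n : ℕ) (α : Type) where
  verts : Set α
  semis : Set (α × Port n)
  edges : Set (Edge n α)

variable {n : ℕ} {α β : Type}

/-- The ports of a vertex: those appearing in `S(G) ∪ E(G)`. -/
def RawGraph.portsAt (G : RawGraph n α) (u : α) : Set (Port n) :=
  {p | (u, p) ∈ G.semis ∨ ∃ e ∈ G.edges, e.u = u ∧ e.p = p}

/-- The five defining conditions of graphs (plus membership of endpoints and
gluings being odd permutations). -/
def RawGraph.IsGraph (G : RawGraph n α) : Prop :=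
  (∀ s ∈ G.semis, s.1 ∈ G.verts) ∧
  (∀ e ∈ G.edges, e.u ∈ G.verts ∧ e.v ∈ G.verts ∧ IsGluing e.γ) ∧
  -- (i) semi-edges and edges are disjoint per port
  (∀ e ∈ G.edges, (e.u, e.p) ∉ G.semis) ∧
  -- (ii) each port occurs in at most one edge
  (∀ e ∈ G.edges, ∀ e' ∈ G.edges, e.u = e'.u → e.p = e'.p → e = e') ∧
  -- (iii) each vertex has exactly n+1 ports
  (∀ u ∈ G.verts, (G.portsAt u).ncard = n + 1) ∧
  -- (iv) the gluing maps the ports of the source onto the ports of the target, sending p to q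
  (∀ e ∈ G.edges, (⇑e.γ) '' G.portsAt e.u = G.portsAt e.v ∧ e.γ e.p = e.q) ∧
  -- (v) edges come in inverse pairs
  (∀ e ∈ G.edges, e.inv ∈ G.edges)

/-- Action of the vertex rotation `r_u` on a single edge. -/
noncomputable def rotEdge (r : Equiv.Perm (Port n)) (u : α) (e : Edge n α) : Edge n α :=
  letI := Classical.decEq α
  ⟨e.u, if e.u = u then r e.p else e.p,
   (if e.v = u then r * e.γ else e.γ) * (if e.u = u then r⁻¹ else 1),
   e.v, if e.v = u then r e.q else e.q⟩

/-- The vertex rotation `r_u` applied to a graph. -/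
noncomputable def rotG (r : Equiv.Perm (Port n)) (u : α) (G : RawGraph n α) : RawGraph n α :=
  letI := Classical.decEq α
  { verts := G.verts
    semis := (fun s => if s.1 = u then (s.1, r s.2) else s) '' G.semis
    edges := rotEdge r u '' G.edges }

/-- A rotation sequence: a finite composition of vertex rotations. -/
abbrev RotSeq (n : ℕ) (α : Type) := List (α × Equiv.Perm (Port n))

/-- Application of a rotation sequence to a graph. -/
noncomputable def applySeq (s : RotSeq n α) (G : RawGraph n α) : RawGraph n α :=
  s.foldr (fun x H => rotG x.2 x.1 H) G

/-- All members of the sequence are rotations (even permutations). -/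
def IsRotSeq (s : RotSeq n α) : Prop := ∀ x ∈ s, IsRotation x.2

/-- `(r̄ / u)`: the ordered composition of the rotations of `r̄` at the vertex `u`. -/
noncomputable def seqAt (s : RotSeq n α) (u : α) : Equiv.Perm (Port n) :=
  letI := Classical.decEq α
  s.foldr (fun x g => if x.1 = u then x.2 * g else g) 1

/-- The rotation sequence acts at vertex `u`. -/
def SeqActsAt (s : RotSeq n α) (u : α) : Prop := ∃ x ∈ s, x.1 = u

/-- Consistency of two rotation sequences: whenever both act upon a common vertex,
their compositions at that vertex coincide. -/
def SeqConsistent (s₁ s₂ : RotSeq n α) : Prop :=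
  ∀ u : α, SeqActsAt s₁ u → SeqActsAt s₂ u → seqAt s₁ u = seqAt s₂ u

/-- The inverse of a rotation sequence. -/
def invSeq (s : RotSeq n α) : RotSeq n α := (s.map (fun x => (x.1, x.2⁻¹))).reverse

/-- Consistency of two graphs. -/
def Consistent (G H : RawGraph n α) : Prop :=
  ∀ u ∈ G.verts ∩ H.verts, ∀ v ∈ G.verts ∪ H.verts,
    ∀ (i j : Port n) (γ : Equiv.Perm (Port n)),
      (Edge.mk u i γ v j ∈ G.edges ∨ (u, i) ∈ G.semis) ↔
      (Edge.mk u i γ v j ∈ H.edges ∨ (u, i) ∈ H.semis)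

/-- Union of two (consistent) graphs: semi-edges are the ports occurring as
semi-edges in `G` or `H` and in no edge of `E(G) ∪ E(H)`. -/
def unionG (G H : RawGraph n α) : RawGraph n α where
  verts := G.verts ∪ H.verts
  semis := {s | s ∈ G.semis ∪ H.semis ∧ ∀ e ∈ G.edges ∪ H.edges, ¬(e.u = s.1 ∧ e.p = s.2)}
  edges := G.edges ∪ H.edges

/-- Union of a family of graphs. -/
def unionFam {ι : Type} (Gs : ι → RawGraph n α) : RawGraph n α where
  verts := ⋃ i, (Gs i).verts
  semis := {s | (∃ i, s ∈ (Gs i).semis) ∧ ∀ i, ∀ e ∈ (Gs i).edges, ¬(e.u = s.1 ∧ e.p = s.2)}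
  edges := ⋃ i, (Gs i).edges

/-- A path of `k` edges `(u_i:p_i, γ_{i+1}, u_{i+1}:q_{i+1})` in `G`. -/
def IsPath (G : RawGraph n α) (k : ℕ) (u : Fin (k+1) → α)
    (p : Fin k → Port n) (γ : Fin k → Equiv.Perm (Port n)) (q : Fin k → Port n) : Prop :=
  ∀ i : Fin k, Edge.mk (u i.castSucc) (p i) (γ i) (u i.succ) (q i) ∈ G.edges

/-- `γ_i ∘ ⋯ ∘ γ_1`: the composition of the first `i` gluings of the path. -/
def compUpTo {n k : ℕ} (γ : Fin k → Equiv.Perm (Port n)) (i : ℕ) : Equiv.Perm (Port n) :=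
  (((List.ofFn γ).take i).reverse).prod

/-- The hinge conditions: `p_i, q_i ∉ (γ_i ∘ ⋯ ∘ γ_1)(F)`. -/
def HingeConds {n k : ℕ} (p : Fin k → Port n) (γ : Fin k → Equiv.Perm (Port n))
    (q : Fin k → Port n) (F : Set (Port n)) : Prop :=
  ∀ i : Fin k, p i ∉ (⇑(compUpTo γ i.val)) '' F ∧ q i ∉ (⇑(compUpTo γ (i.val + 1))) '' F

/-- A hinge of length `k` starting at the face `F` at `u 0`. -/
def IsHinge (G : RawGraph n α) (k : ℕ) (u : Fin (k+1) → α)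
    (p : Fin k → Port n) (γ : Fin k → Equiv.Perm (Port n)) (q : Fin k → Port n)
    (F : Set (Port n)) : Prop :=
  IsPath G k u p γ q ∧ F.Nonempty ∧ F ⊆ G.portsAt (u 0) ∧ HingeConds p γ q F

/-- Equivalence of faces: `F` at `u` and `F'` at `u'` are related by a hinge. -/
def EquivFace (G : RawGraph n α) (u : α) (F : Set (Port n)) (u' : α) (F' : Set (Port n)) :
    Prop :=
  ∃ (k : ℕ) (w : Fin (k+1) → α) (p : Fin k → Port n) (γ : Fin k → Equiv.Perm (Port n))
    (q : Fin k → Port n), IsHinge G k w p γ q F ∧ w 0 = u ∧ w (Fin.last k) = u' ∧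
      F' = (⇑(compUpTo γ k)) '' F

/-- A torsion: a hinge around two distinct faces at the same vertex. -/
def HasTorsion (G : RawGraph n α) : Prop :=
  ∃ (u : α) (F F' : Set (Port n)), F ≠ F' ∧ EquivFace G u F u F'

/-- `s`-bounded-star: every hinge has length at most `s`. -/
def BoundedStar (G : RawGraph n α) (s : ℕ) : Prop :=
  ∀ (k : ℕ) (u : Fin (k+1) → α) (p : Fin k → Port n) (γ : Fin k → Equiv.Perm (Port n))
    (q : Fin k → Port n) (F : Set (Port n)), IsHinge G k u p γ q F → k ≤ s

/-- A path is in normal form. -/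
def NormalForm (G : RawGraph n α) {k : ℕ} (u : Fin (k+1) → α)
    (p : Fin k → Port n) (γ : Fin k → Equiv.Perm (Port n)) (q : Fin k → Port n) : Prop :=
  ∀ i : Fin k, γ i = Equiv.swap (p i) (q i) ∧
    G.portsAt (u i.succ) = insert (q i) (G.portsAt (u i.castSucc) \ {p i})

/-- The covering semi-edges of a face `F` at `u`. -/
def coveringSemis (G : RawGraph n α) (u : α) (F : Set (Port n)) : Set (α × Port n) :=
  {s | s ∈ G.semis ∧ ∃ F', EquivFace G u F s.1 F' ∧ s.2 ∉ F'}

/-- Geometrical neighbors: vertices sharing an equivalent face. -/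
def GeomNeighbor (G : RawGraph n α) (u u' : α) : Prop :=
  ∃ F F', EquivFace G u F u' F'

/-- Induced subgraph on a set of vertices, breaking outgoing edges into semi-edges. -/
def inducedSub (G : RawGraph n α) (W : Set α) : RawGraph n α where
  verts := G.verts ∩ W
  semis := {s | s.1 ∈ G.verts ∩ W ∧
    (s ∈ G.semis ∨ ∃ e ∈ G.edges, e.u = s.1 ∧ e.p = s.2 ∧ e.v ∉ W)}
  edges := {e ∈ G.edges | e.u ∈ W ∧ e.v ∈ W}

/-- The star of a vertex: the subgraph induced by `u` and its geometrical neighbors. -/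
def geomStar (G : RawGraph n α) (u : α) : RawGraph n α :=
  inducedSub G {v | v = u ∨ GeomNeighbor G u v}

/-- Adjacency via edges. -/
def Adj (G : RawGraph n α) (u v : α) : Prop := ∃ e ∈ G.edges, e.u = u ∧ e.v = v

/-- Graph distance at most `d`. -/
inductive ReachLE (G : RawGraph n α) : ℕ → α → α → Prop
  | refl (d : ℕ) (u : α) : ReachLE G d u u
  | step {d : ℕ} {u v w : α} : Adj G u v → ReachLE G d v w → ReachLE G (d+1) u w

/-- The ball of radius `d` around `v`. -/
def ball (G : RawGraph n α) (v : α) (d : ℕ) : Set α := {u | ReachLE G d v u}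

/-- The disk `G^r_v`: subgraph induced by vertices at graph distance at most `r+1`,
with outgoing edges broken into semi-edges. -/
def disk (G : RawGraph n α) (v : α) (r : ℕ) : RawGraph n α :=
  inducedSub G (ball G v (r+1))

/-- Being a disk of radius `r` (an element of `D^r`). -/
def IsDisk (D : RawGraph n α) (r : ℕ) : Prop :=
  ∃ (G : RawGraph n α) (v : α), G.IsGraph ∧ v ∈ G.verts ∧ D = disk G v r

/-- Subgraph relation. -/
def Subgraph (H G : RawGraph n α) : Prop := H.verts ⊆ G.verts ∧ H.edges ⊆ G.edges

/-- Compound names: finite sets of pairs `(u, i)` representing `{u.i, v.j, …}`. -/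
abbrev CName := Finset (ℕ × ℕ)

/-- Renaming of graphs along a map on vertex names. -/
def mapG (R : α → β) (G : RawGraph n α) : RawGraph n β where
  verts := R '' G.verts
  semis := (fun s => (R s.1, s.2)) '' G.semis
  edges := (fun e => Edge.mk (R e.u) e.p e.γ (R e.v) e.q) '' G.edges

/-- `R*`: renaming of compound names. -/
def mapCN (R : ℕ → ℕ) (c : CName) : CName := c.image (fun x => (R x.1, x.2))

/-- A local rule of radius `r` over the universe of names `ℕ`, with bound `b`. -/
structure LocalRule (n r : ℕ) where
  f : RawGraph n ℕ → RawGraph n CName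
  b : ℕ
  isGraph : ∀ D, IsDisk D r → (f D).IsGraph
  bound : ∀ D, IsDisk D r → ∀ c ∈ (f D).verts, ∀ x ∈ c, x.1 ∈ D.verts ∧ x.2 ≤ b
  consist : ∀ G : RawGraph n ℕ, G.IsGraph → ∀ v ∈ G.verts, ∀ w ∈ G.verts,
    Consistent (f (disk G v r)) (f (disk G w r))
  equivar : ∀ R : ℕ ≃ ℕ, ∀ D, IsDisk D r → f (mapG R D) = mapG (mapCN R) (f D)

/-- The global dynamics induced by a local rule: `F(G) = ⋃_{v ∈ G} f(G^r_v)`. -/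
noncomputable def induced (f : RawGraph n ℕ → RawGraph n CName) (r : ℕ)
    (G : RawGraph n ℕ) : RawGraph n CName :=
  unionFam (fun v : G.verts => f (disk G (v : ℕ) r))

/-- A dynamics is rotation-commuting. -/
def RotCommuting {n : ℕ} (F : RawGraph n ℕ → RawGraph n CName) : Prop :=
  ∀ G : RawGraph n ℕ, G.IsGraph → ∀ s : RotSeq n ℕ, IsRotSeq s →
    ∃ s' : RotSeq n CName, IsRotSeq s' ∧ F (applySeq s G) = applySeq s' (F G)

/-- An intersecting pair of disks `D₁, D₂` of a common graph. -/
def IntersectingDiskPair (r : ℕ) (D₁ D₂ : RawGraph n ℕ) : Prop :=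
  ∃ (G : RawGraph n ℕ) (v₁ v₂ : ℕ), G.IsGraph ∧ v₁ ∈ G.verts ∧ v₂ ∈ G.verts ∧
    D₁ = disk G v₁ r ∧ D₂ = disk G v₂ r ∧ (D₁.verts ∩ D₂.verts).Nonempty

/-- A local rule is strongly-rotation-commuting. -/
def StronglyRotCommuting {n r : ℕ} (L : LocalRule n r) : Prop :=
  (∀ D, IsDisk D r → ∀ s : RotSeq n ℕ, IsRotSeq s →
    ∃ s' : RotSeq n CName, IsRotSeq s' ∧ L.f (applySeq s D) = applySeq s' (L.f D)) ∧
  (∀ D₁ D₂, IntersectingDiskPair r D₁ D₂ → ∀ s : RotSeq n ℕ, IsRotSeq s →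
    ∀ s₁ s₂ : RotSeq n CName, IsRotSeq s₁ → IsRotSeq s₂ →
      L.f (applySeq s D₁) = applySeq s₁ (L.f D₁) →
      L.f (applySeq s D₂) = applySeq s₂ (L.f D₂) →
      ∀ c ∈ (L.f D₁).verts ∩ (L.f D₂).verts, seqAt s₁ c = seqAt s₂ c)

/-- The transposition `s₀₁` of the ports 0 and 1. -/
def sw01 (n : ℕ) : Equiv.Perm (Port n) := Equiv.swap 0 1

/-- The canonical sphere `∂Δ_{n+1}` on the vertex names `φ 0, …, φ (n+1)`. -/
def sphereAt {n : ℕ} {α : Type} (φ : Fin (n+2) → α) : RawGraph n α where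
  verts := Set.range φ
  semis := ∅
  edges := {e | ∃ i j : Fin (n+2), i ≠ j ∧ e = ⟨φ i, j, Equiv.swap i j, φ j, i⟩}

/-- A bistellar move: replacing the part `H = φ '' W` of a canonical sphere lying in `G`
by its complement `s̄ H*`. -/
def BistellarMove (G G' : RawGraph n α) : Prop :=
  ∃ (φ : Fin (n+2) → α) (W : Set (Fin (n+2))),
    Function.Injective φ ∧ W.Nonempty ∧ W ≠ Set.univ ∧
    (∀ i ∈ W, φ i ∈ G.verts) ∧ (∀ i ∉ W, φ i ∉ G.verts) ∧
    (∀ i ∈ W, ∀ j ∈ W, i ≠ j → Edge.mk (φ i) j (Equiv.swap i j) (φ j) i ∈ G.edges) ∧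
    (∀ i ∈ W, G.portsAt (φ i) = {j | j ≠ i}) ∧
    G'.verts = (G.verts \ (φ '' W)) ∪ (φ '' Wᶜ) ∧
    G'.edges =
      ({e ∈ G.edges | e.u ∉ φ '' W ∧ e.v ∉ φ '' W} ∪
       {e | ∃ i j : Fin (n+2), i ∉ W ∧ j ∉ W ∧ i ≠ j ∧
          e = Edge.mk (φ i) (sw01 n j) (sw01 n * Equiv.swap i j * sw01 n) (φ j) (sw01 n i)} ∪
       {e | ∃ e' ∈ G.edges, ∃ i ∈ W, e'.u = φ i ∧ e'.v ∉ φ '' W ∧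
          (e = Edge.mk (φ e'.p) (sw01 n i) (e'.γ * (Equiv.swap i e'.p * sw01 n)) e'.v e'.q ∨
           e = Edge.mk e'.v e'.q (e'.γ * (Equiv.swap i e'.p * sw01 n))⁻¹ (φ e'.p) (sw01 n i))}) ∧
    G'.semis =
      ({s ∈ G.semis | s.1 ∉ φ '' W} ∪
       {s | ∃ j ∈ W, ∃ p : Fin (n+2), p ∉ W ∧ (φ j, p) ∈ G.semis ∧ s = (φ p, sw01 n j)})

/-- A graph-local inverse shelling: gluing a fresh vertex `v` onto a set `S` of at most `n`
free ports of `u`, via the gluing `s₀₁`. -/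
def LocalInvShelling (G G' : RawGraph n α) : Prop :=
  ∃ u ∈ G.verts, ∃ (S : Set (Port n)) (v : α),
    v ∉ G.verts ∧ S.ncard ≤ n ∧ (∀ p ∈ S, (u, p) ∈ G.semis) ∧
    G'.verts = insert v G.verts ∧
    G'.edges = G.edges ∪ {e | ∃ p ∈ S, e = Edge.mk u p (sw01 n) v (sw01 n p) ∨
                                        e = Edge.mk v (sw01 n p) (sw01 n) u p} ∧
    G'.semis = (G.semis \ {s | s.1 = u ∧ s.2 ∈ S}) ∪
               {s | ∃ p ∈ G.portsAt u \ S, s = (v, sw01 n p)}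

/-- Graph-local Pachner moves: vertex rotations, bistellar moves, and
graph-local (inverse) shellings. -/
inductive PachnerMove (n : ℕ) {α : Type} : RawGraph n α → RawGraph n α → Prop
  | rot {G : RawGraph n α} {r : Equiv.Perm (Port n)} {u : α} :
      IsRotation r → u ∈ G.verts → PachnerMove n G (rotG r u G)
  | bist {G G' : RawGraph n α} : BistellarMove G G' → PachnerMove n G G'
  | bistInv {G G' : RawGraph n α} : BistellarMove G' G → PachnerMove n G G'
  | shellInv {G G' : RawGraph n α} : LocalInvShelling G G' → PachnerMove n G G'
  | shell {G G' : RawGraph n α} : LocalInvShelling G' G → PachnerMove n G G'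

/-- `Δ_n`: a single vertex, all of whose `n+1` ports are semi-edges. -/
def IsSimplexGraph (G : RawGraph n α) : Prop :=
  ∃ (v : α) (P : Set (Port n)), P.ncard = n + 1 ∧ G.verts = {v} ∧ G.edges = ∅ ∧
    G.semis = {s | s.1 = v ∧ s.2 ∈ P}

/-- A discrete manifold: the star of every vertex can be sent onto `Δ_n` by
graph-local Pachner moves. -/
def DiscreteManifold (G : RawGraph n α) : Prop :=
  G.IsGraph ∧ ∀ u ∈ G.verts,
    ∃ H : RawGraph n α, Relation.ReflTransGen (PachnerMove n) (geomStar G u) H ∧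
      IsSimplexGraph H

/-- A standard inverse shelling `G.F` at a border `k`-face `F` at `u` having exactly
`n-k` covering semi-edges. -/
def StdInvShelling (G G' : RawGraph n α) : Prop :=
  ∃ u ∈ G.verts, ∃ (F : Set (Port n)) (k : ℕ),
    F ⊆ G.portsAt u ∧ F.ncard = k + 1 ∧
    (coveringSemis G u F).Nonempty ∧ (coveringSemis G u F).ncard = n - k ∧
    ∃ v : α, v ∉ G.verts ∧ G'.IsGraph ∧ ¬ HasTorsion G' ∧
      G'.verts = insert v G.verts ∧
      G'.edges = G.edges ∪ {e | ∃ s ∈ coveringSemis G u F,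
        e = Edge.mk s.1 s.2 (sw01 n) v (sw01 n s.2) ∨
        e = Edge.mk v (sw01 n s.2) (sw01 n) s.1 s.2} ∧
      (∀ s : α × Port n, s.1 ≠ v → (s ∈ G'.semis ↔ s ∈ G.semis ∧ s ∉ coveringSemis G u F))

/-!
Two consistent graphs have the same semi-edges and the same edges at each common vertex, so an
edge of one graph which starts in the other also ends there. The two endpoints of an edge of the
union therefore lie in the same members `G i` of the family. Choosing for each vertex `w`, as a
function of the set of `i` with `w ∈ G i`, one such index `c w`, the assignment
`w ↦ (s (c w) / w)` takes both of its values along an edge from one and the same sequence. At every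
vertex `u` of `G i` it rotates `G i` as `s (c u)` rotates `G (c u)`, hence, by consistency of the
rotated graphs, as `s i` rotates `G i`. The assignment is even and moves finitely many vertices, so
it is realised by one rotation sequence, and rotation by a fixed sequence commutes with unions.
-/

/-- Rotation of an edge by a family of port permutations, one for each vertex. -/
def Edge.rotate (ρ : α → Equiv.Perm (Port n)) (e : Edge n α) : Edge n α :=
  ⟨e.u, ρ e.u e.p, ρ e.v * e.γ * (ρ e.u)⁻¹, e.v, ρ e.v e.q⟩

/-- Simultaneous rotation of all vertices of a graph, the vertex `u` by `ρ u`. Every rotation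
sequence acts in this way (`applySeq_eq_rotate`). -/
def RawGraph.rotate (ρ : α → Equiv.Perm (Port n)) (G : RawGraph n α) : RawGraph n α where
  verts := G.verts
  semis := (fun x => (x.1, ρ x.1 x.2)) '' G.semis
  edges := Edge.rotate ρ '' G.edges

/-- The ports of `u` that are semi-edges of `G`. -/
def RawGraph.semisAt (G : RawGraph n α) (u : α) : Set (Port n) := {p | (u, p) ∈ G.semis}

/-- The edges of `G` with source `u`. -/
def RawGraph.edgesFrom (G : RawGraph n α) (u : α) : Set (Edge n α) := {e ∈ G.edges | e.u = u}

/-- `G` and `H` look the same from the vertex `u`: they have the same semi-edges and the same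
outgoing edges there. -/
structure AgreeAt (G H : RawGraph n α) (u : α) : Prop where
  semisAt_eq : G.semisAt u = H.semisAt u
  edgesFrom_eq : G.edgesFrom u = H.edgesFrom u

variable {G H : RawGraph n α} {u : α} {ρ σ : α → Equiv.Perm (Port n)}

section IsGraph

variable {e : Edge n α}

theorem RawGraph.IsGraph.semi_mem (hG : G.IsGraph) {x : α × Port n} (hx : x ∈ G.semis) :
    x.1 ∈ G.verts :=
  hG.1 x hx

theorem RawGraph.IsGraph.source_mem (hG : G.IsGraph) (he : e ∈ G.edges) : e.u ∈ G.verts :=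
  (hG.2.1 e he).1

theorem RawGraph.IsGraph.target_mem (hG : G.IsGraph) (he : e ∈ G.edges) : e.v ∈ G.verts :=
  (hG.2.1 e he).2.1

theorem RawGraph.IsGraph.isGluing (hG : G.IsGraph) (he : e ∈ G.edges) : IsGluing e.γ :=
  (hG.2.1 e he).2.2

theorem RawGraph.IsGraph.notMem_semis (hG : G.IsGraph) (he : e ∈ G.edges) :
    (e.u, e.p) ∉ G.semis :=
  hG.2.2.1 e he

theorem RawGraph.IsGraph.inv_mem (hG : G.IsGraph) (he : e ∈ G.edges) : e.inv ∈ G.edges :=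
  hG.2.2.2.2.2.2 e he

end IsGraph

section Rotate

theorem Edge.rotate_inv (ρ : α → Equiv.Perm (Port n)) (e : Edge n α) :
    (e.rotate ρ).inv = e.inv.rotate ρ := by
  simp [Edge.rotate, Edge.inv, mul_assoc]

theorem Edge.rotate_rotate (ρ σ : α → Equiv.Perm (Port n)) (e : Edge n α) :
    (e.rotate σ).rotate ρ = e.rotate (ρ * σ) := by
  simp [Edge.rotate, mul_assoc]

theorem Edge.rotate_congr {e : Edge n α} (hu : ρ e.u = σ e.u) (hv : ρ e.v = σ e.v) :
    e.rotate ρ = e.rotate σ := by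
  simp only [Edge.rotate, hu, hv]

theorem RawGraph.rotate_one (G : RawGraph n α) : G.rotate 1 = G := by
  ext <;> simp [RawGraph.rotate, Edge.rotate]

theorem RawGraph.rotate_rotate (ρ σ : α → Equiv.Perm (Port n)) (G : RawGraph n α) :
    (G.rotate σ).rotate ρ = G.rotate (ρ * σ) := by
  simp [RawGraph.rotate, Set.image_image, Edge.rotate_rotate]

theorem RawGraph.semisAt_rotate (ρ : α → Equiv.Perm (Port n)) (G : RawGraph n α) (u : α) :
    (G.rotate ρ).semisAt u = ρ u '' G.semisAt u := by
  ext p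
  constructor
  · rintro ⟨⟨v, q⟩, hq, heq⟩
    obtain ⟨rfl, rfl⟩ := Prod.mk.inj heq
    exact ⟨q, hq, rfl⟩
  · rintro ⟨q, hq, rfl⟩
    exact ⟨(u, q), hq, rfl⟩

theorem RawGraph.edgesFrom_rotate (ρ : α → Equiv.Perm (Port n)) (G : RawGraph n α) (u : α) :
    (G.rotate ρ).edgesFrom u = Edge.rotate ρ '' G.edgesFrom u := by
  ext e
  constructor
  · rintro ⟨⟨e, he, rfl⟩, hu⟩
    exact ⟨e, ⟨he, hu⟩, rfl⟩
  · rintro ⟨e, ⟨he, hu⟩, rfl⟩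
    exact ⟨⟨e, he, rfl⟩, hu⟩

theorem RawGraph.portsAt_eq_union (G : RawGraph n α) (u : α) :
    G.portsAt u = G.semisAt u ∪ Edge.p '' G.edgesFrom u := by
  ext p
  simp [RawGraph.portsAt, RawGraph.semisAt, RawGraph.edgesFrom, and_assoc]

theorem RawGraph.portsAt_rotate (ρ : α → Equiv.Perm (Port n)) (G : RawGraph n α) (u : α) :
    (G.rotate ρ).portsAt u = ρ u '' G.portsAt u := by
  have image_port : Edge.p '' (Edge.rotate ρ '' G.edgesFrom u) =
      ρ u '' (Edge.p '' G.edgesFrom u) := by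
    simp only [Set.image_image]
    refine Set.image_congr fun e he => ?_
    rw [← he.2, Edge.rotate]
  simp only [RawGraph.portsAt_eq_union, RawGraph.semisAt_rotate, RawGraph.edgesFrom_rotate,
    image_port, Set.image_union]

theorem unionFam_rotate {ι : Type} (ρ : α → Equiv.Perm (Port n)) (G : ι → RawGraph n α) :
    unionFam (fun i => (G i).rotate ρ) = (unionFam G).rotate ρ := by
  ext x
  · rfl
  · constructor
    · rintro ⟨⟨i, y, hy, rfl⟩, hfree⟩
      refine ⟨y, ⟨⟨i, hy⟩, ?_⟩, rfl⟩
      rintro j e he ⟨hu, hp⟩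
      exact hfree j _ ⟨e, he, rfl⟩ ⟨hu, by simp only [Edge.rotate, hu, hp]⟩
    · rintro ⟨y, ⟨⟨i, hy⟩, hfree⟩, rfl⟩
      refine ⟨⟨i, y, hy, rfl⟩, ?_⟩
      rintro j _ ⟨e, he, rfl⟩ ⟨hu, hp⟩
      have hu : e.u = y.1 := hu
      have hp : ρ e.u e.p = ρ y.1 y.2 := hp
      exact hfree j e he ⟨hu, (ρ y.1).injective (hu ▸ hp)⟩
  · simp only [unionFam, RawGraph.rotate, Set.image_iUnion]

theorem RawGraph.IsGraph.rotate (hG : G.IsGraph) (hρ : ∀ w, IsRotation (ρ w)) :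
    (G.rotate ρ).IsGraph := by
  obtain ⟨semis_mem, edges_mem, disjoint, unique, ncard_ports, gluing, inv_mem⟩ := hG
  refine ⟨?_, ?_, ?_, ?_, ?_, ?_, ?_⟩
  · rintro _ ⟨x, hx, rfl⟩
    exact semis_mem x hx
  · rintro _ ⟨e, he, rfl⟩
    obtain ⟨hu, hv, hγ⟩ := edges_mem e he
    simp only [IsGluing, IsRotation] at hγ hρ
    exact ⟨hu, hv, by simp [IsGluing, Edge.rotate, hγ, hρ]⟩
  · rintro _ ⟨e, he, rfl⟩ ⟨⟨v, q⟩, hq, heq⟩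
    obtain ⟨rfl, hport⟩ := Prod.mk.inj heq
    obtain rfl := (ρ e.u).injective hport
    exact disjoint e he hq
  · rintro _ ⟨e, he, rfl⟩ _ ⟨e', he', rfl⟩ (hu : e.u = e'.u) (hp : ρ e.u e.p = ρ e'.u e'.p)
    rw [← hu] at hp
    rw [unique e he e' he' hu ((ρ e.u).injective hp)]
  · intro u hu
    rw [RawGraph.portsAt_rotate, Set.ncard_image_of_injective _ (ρ u).injective]
    exact ncard_ports u hu
  · rintro _ ⟨e, he, rfl⟩
    obtain ⟨hports, hpq⟩ := gluing e he
    simp [RawGraph.portsAt_rotate, Edge.rotate, ← hports, ← hpq, Set.image_image]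
  · rintro _ ⟨e, he, rfl⟩
    exact ⟨e.inv, inv_mem e he, (e.rotate_inv ρ).symm⟩

end Rotate

section AgreeAt

theorem AgreeAt.trans {K : RawGraph n α} (hGH : AgreeAt G H u) (hHK : AgreeAt H K u) :
    AgreeAt G K u :=
  ⟨hGH.semisAt_eq.trans hHK.semisAt_eq, hGH.edgesFrom_eq.trans hHK.edgesFrom_eq⟩

theorem AgreeAt.rotate (h : AgreeAt G H u) (hu : ρ u = σ u)
    (hv : ∀ e ∈ G.edgesFrom u, ρ e.v = σ e.v) : AgreeAt (G.rotate ρ) (H.rotate σ) u where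
  semisAt_eq := by rw [RawGraph.semisAt_rotate, RawGraph.semisAt_rotate, h.semisAt_eq, hu]
  edgesFrom_eq := by
    rw [RawGraph.edgesFrom_rotate, RawGraph.edgesFrom_rotate, ← h.edgesFrom_eq]
    refine Set.image_congr fun e he => Edge.rotate_congr ?_ (hv e he)
    rw [he.2, hu]

theorem RawGraph.IsGraph.eq_of_agreeAt (hG : G.IsGraph) (hH : H.IsGraph)
    (hverts : G.verts = H.verts) (h : ∀ u ∈ G.verts, AgreeAt G H u) : G = H := by
  ext x
  · rw [hverts]
  · have agree (hx : x.1 ∈ G.verts) : x ∈ G.semis ↔ x ∈ H.semis :=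
      Set.ext_iff.1 (h x.1 hx).semisAt_eq x.2
    exact ⟨fun hx => (agree (hG.semi_mem hx)).1 hx,
      fun hx => (agree (hverts ▸ hH.semi_mem hx)).2 hx⟩
  · have agree (hx : x.u ∈ G.verts) : x ∈ G.edges ↔ x ∈ H.edges := by
      simpa [RawGraph.edgesFrom] using Set.ext_iff.1 (h x.u hx).edgesFrom_eq x
    exact ⟨fun hx => (agree (hG.source_mem hx)).1 hx,
      fun hx => (agree (hverts ▸ hH.source_mem hx)).2 hx⟩

end AgreeAt

section Consistent

theorem Consistent.symm (h : Consistent G H) : Consistent H G :=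
  fun u hu v hv i j γ => (h u hu.symm v hv.symm i j γ).symm

theorem Consistent.semisAt_subset (h : Consistent G H) (hH : H.IsGraph)
    (huG : u ∈ G.verts) (huH : u ∈ H.verts) : G.semisAt u ⊆ H.semisAt u := by
  intro p hp
  -- The identity is even, so it never occurs as the gluing of an edge of `H`.
  refine ((h u ⟨huG, huH⟩ u (Or.inl huG) p 0 1).1 (Or.inr hp)).resolve_left fun he => ?_
  have one_isGluing : IsGluing (1 : Equiv.Perm (Port n)) := hH.isGluing he
  simp [IsGluing] at one_isGluing

theorem Consistent.edgesFrom_subset (h : Consistent G H) (hG : G.IsGraph)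
    (huH : u ∈ H.verts) : G.edgesFrom u ⊆ H.edgesFrom u := by
  rintro e ⟨he, rfl⟩
  have huG : e.u ∈ G.verts := hG.source_mem he
  refine ⟨((h e.u ⟨huG, huH⟩ e.v (Or.inl (hG.target_mem he)) e.p e.q e.γ).1
    (Or.inl he)).resolve_right fun hsemi => hG.notMem_semis he ?_, rfl⟩
  exact h.symm.semisAt_subset hG huH huG hsemi

theorem Consistent.agreeAt (h : Consistent G H) (hG : G.IsGraph) (hH : H.IsGraph)
    (huG : u ∈ G.verts) (huH : u ∈ H.verts) : AgreeAt G H u where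
  semisAt_eq := (h.semisAt_subset hH huG huH).antisymm (h.symm.semisAt_subset hG huH huG)
  edgesFrom_eq := (h.edgesFrom_subset hG huH).antisymm (h.symm.edgesFrom_subset hH huG)

theorem Consistent.target_mem (h : Consistent G H) (hG : G.IsGraph) (hH : H.IsGraph)
    {e : Edge n α} (he : e ∈ G.edges) (hu : e.u ∈ H.verts) : e.v ∈ H.verts :=
  hH.target_mem (h.edgesFrom_subset hG hu ⟨he, rfl⟩).1

theorem Consistent.source_mem_iff_target_mem (h : Consistent G H) (hG : G.IsGraph)
    (hH : H.IsGraph) {e : Edge n α} (he : e ∈ G.edges) : e.u ∈ H.verts ↔ e.v ∈ H.verts :=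
  ⟨h.target_mem hG hH he, h.target_mem hG hH (hG.inv_mem he)⟩

end Consistent

section RotSeq

theorem rotG_eq_rotate [DecidableEq α] (r : Equiv.Perm (Port n)) (u : α) (G : RawGraph n α) :
    rotG r u G = G.rotate (Pi.mulSingle u r) := by
  have rotEdge_eq (e : Edge n α) : rotEdge r u e = e.rotate (Pi.mulSingle u r) := by
    by_cases hu : e.u = u <;> by_cases hv : e.v = u <;>
      simp [rotEdge, Edge.rotate, hu, hv]
  have rotSemi_eq (x : α × Port n) :
      (if x.1 = u then (x.1, r x.2) else x) =
        (x.1, (Pi.mulSingle u r : α → Equiv.Perm (Port n)) x.1 x.2) := by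
    by_cases hu : x.1 = u <;> simp [hu]
  ext x
  · rfl
  · simp [rotG, RawGraph.rotate, ← rotSemi_eq]
  · simp [rotG, RawGraph.rotate, rotEdge_eq]

theorem seqAt_nil : seqAt ([] : RotSeq n α) = 1 := rfl

theorem seqAt_cons [DecidableEq α] (x : α × Equiv.Perm (Port n)) (s : RotSeq n α) :
    seqAt (x :: s) = Pi.mulSingle x.1 x.2 * seqAt s := by
  funext w
  by_cases hw : x.1 = w <;> simp [seqAt, hw]

theorem applySeq_eq_rotate (s : RotSeq n α) (G : RawGraph n α) :
    applySeq s G = G.rotate (seqAt s) := by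
  classical
  induction s with
  | nil => exact G.rotate_one.symm
  | cons x s ih =>
    calc applySeq (x :: s) G = rotG x.2 x.1 (applySeq s G) := rfl
      _ = G.rotate (seqAt (x :: s)) := by
        rw [ih, rotG_eq_rotate, RawGraph.rotate_rotate, seqAt_cons]

theorem unionFam_applySeq {ι : Type} (s : RotSeq n α) (G : ι → RawGraph n α) :
    unionFam (fun i => applySeq s (G i)) = applySeq s (unionFam G) := by
  simp only [applySeq_eq_rotate, unionFam_rotate]

theorem IsRotSeq.isRotation_seqAt {s : RotSeq n α} (hs : IsRotSeq s) (w : α) :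
    IsRotation (seqAt s w) := by
  classical
  induction s with
  | nil => exact Equiv.Perm.sign_one
  | cons x s ih =>
    obtain ⟨hx, hs⟩ := List.forall_mem_cons.1 hs
    rw [IsRotation] at hx ih ⊢
    rw [seqAt_cons, Pi.mul_apply, Equiv.Perm.sign_mul, ih hs, mul_one]
    by_cases hw : w = x.1
    · rw [hw, Pi.mulSingle_eq_same, hx]
    · rw [Pi.mulSingle_eq_of_ne hw, Equiv.Perm.sign_one]

theorem finite_mulSupport_seqAt (s : RotSeq n α) : (Function.mulSupport (seqAt s)).Finite := by
  classical
  induction s with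
  | nil => simp [seqAt_nil]
  | cons x s ih =>
    rw [seqAt_cons]
    exact (((Set.finite_singleton x.1).subset Pi.mulSupport_mulSingle_subset).union ih).subset
      (Function.mulSupport_mul _ _)

theorem seqAt_map_of_nodup [DecidableEq α] (ρ : α → Equiv.Perm (Port n)) {l : List α}
    (hl : l.Nodup) (w : α) :
    seqAt (l.map fun v => (v, ρ v)) w = if w ∈ l then ρ w else 1 := by
  induction l with
  | nil => simp [seqAt_nil]
  | cons v l ih =>
    obtain ⟨hv, hl⟩ := List.nodup_cons.1 hl
    rw [List.map_cons, seqAt_cons, Pi.mul_apply, ih hl]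
    by_cases hw : w = v
    · subst hw
      simp [hv]
    · simp [hw]

theorem exists_isRotSeq_seqAt_eq (hfin : (Function.mulSupport ρ).Finite)
    (hρ : ∀ w, IsRotation (ρ w)) : ∃ t : RotSeq n α, IsRotSeq t ∧ seqAt t = ρ := by
  classical
  refine ⟨hfin.toFinset.toList.map fun v => (v, ρ v), ?_, ?_⟩
  · intro x hx
    obtain ⟨v, -, rfl⟩ := List.mem_map.1 hx
    exact hρ v
  · funext w
    by_cases hw : ρ w = 1 <;> simp [seqAt_map_of_nodup ρ (Finset.nodup_toList _), hw]

theorem exists_isRotSeq_seqAt_eq_select {ι : Type} [Finite ι] {s : ι → RotSeq n α}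
    (hs : ∀ i, IsRotSeq (s i)) (c : α → ι) :
    ∃ t : RotSeq n α, IsRotSeq t ∧ ∀ w, seqAt t w = seqAt (s (c w)) w := by
  have hfin : (Function.mulSupport fun w => seqAt (s (c w)) w).Finite :=
    (Set.finite_iUnion fun i => finite_mulSupport_seqAt (s i)).subset
      fun w hw => Set.mem_iUnion.2 ⟨c w, hw⟩
  obtain ⟨t, ht, heq⟩ := exists_isRotSeq_seqAt_eq hfin fun w => (hs (c w)).isRotation_seqAt w
  exact ⟨t, ht, congrFun heq⟩

end RotSeq

section Family

variable {ι : Type} {G : ι → RawGraph n α}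

theorem exists_index_constant_on_edges [Nonempty ι] (hG : ∀ i, (G i).IsGraph)
    (hGc : ∀ i j, Consistent (G i) (G j)) :
    ∃ c : α → ι, (∀ i, ∀ w ∈ (G i).verts, w ∈ (G (c w)).verts) ∧
      ∀ i, ∀ e ∈ (G i).edges, c e.u = c e.v := by
  refine ⟨fun w => Classical.epsilon fun i => w ∈ (G i).verts,
    fun i w hw => Classical.epsilon_spec (p := fun j => w ∈ (G j).verts) ⟨i, hw⟩,
    fun i e he => ?_⟩
  simp only [fun j => (hGc i j).source_mem_iff_target_mem (hG i) (hG j) he]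

theorem rotate_eq_rotate_select {c : α → ι} {τ : ι → α → Equiv.Perm (Port n)}
    (hG : ∀ i, (G i).IsGraph) (hτ : ∀ i w, IsRotation (τ i w))
    (hGc : ∀ i j, Consistent (G i) (G j))
    (hrot : ∀ i j, Consistent ((G i).rotate (τ i)) ((G j).rotate (τ j)))
    (hmem : ∀ i, ∀ w ∈ (G i).verts, w ∈ (G (c w)).verts)
    (hedge : ∀ i, ∀ e ∈ (G i).edges, c e.u = c e.v) (i : ι) :
    (G i).rotate (τ i) = (G i).rotate fun w => τ (c w) w := by
  have hGτ (j : ι) : ((G j).rotate (τ j)).IsGraph := (hG j).rotate (hτ j)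
  refine (hGτ i).eq_of_agreeAt ((hG i).rotate fun w => hτ (c w) w) rfl fun u hu => ?_
  have huc : u ∈ (G (c u)).verts := hmem i u hu
  have agree_rotated : AgreeAt ((G i).rotate (τ i)) ((G (c u)).rotate (τ (c u))) u :=
    (hrot i (c u)).agreeAt (hGτ i) (hGτ (c u)) hu huc
  have agree : AgreeAt (G (c u)) (G i) u := (hGc (c u) i).agreeAt (hG (c u)) (hG i) huc hu
  refine agree_rotated.trans (agree.rotate rfl ?_)
  rintro e ⟨he, rfl⟩
  rw [hedge _ e he]

end Family

theorem rotation_sequences_merge_general {ι : Type} [Finite ι]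
    (G : ι → RawGraph n α) (s : ι → RotSeq n α)
    (hG : ∀ i, (G i).IsGraph) (hs : ∀ i, IsRotSeq (s i))
    (hGc : ∀ i j, Consistent (G i) (G j))
    (hrot : ∀ i j, Consistent (applySeq (s i) (G i)) (applySeq (s j) (G j))) :
    ∃ t : RotSeq n α, IsRotSeq t ∧
      unionFam (fun i => applySeq (s i) (G i)) = applySeq t (unionFam G) := by
  suffices common : ∃ t : RotSeq n α, IsRotSeq t ∧
      ∀ i, applySeq (s i) (G i) = applySeq t (G i) by
    obtain ⟨t, ht, happly⟩ := common
    exact ⟨t, ht, by simp only [happly, unionFam_applySeq]⟩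
  rcases isEmpty_or_nonempty ι with _ | _
  · exact ⟨[], List.forall_mem_nil _, isEmptyElim⟩
  obtain ⟨c, hmem, hedge⟩ := exists_index_constant_on_edges hG hGc
  obtain ⟨t, ht, hseq⟩ := exists_isRotSeq_seqAt_eq_select hs c
  refine ⟨t, ht, fun i => ?_⟩
  simp only [applySeq_eq_rotate] at hrot ⊢
  rw [rotate_eq_rotate_select hG (fun i => (hs i).isRotation_seqAt) hGc hrot hmem hedge i]
  exact congrArg (G i).rotate (funext hseq).symm

/-- Consistent rotation sequences applied to consistent graphs merge into
a single rotation sequence applied to the union. -/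
theorem rotation_sequences_merge {n : ℕ} {α : Type} (k : ℕ)
    (G : Fin k → RawGraph n α) (s : Fin k → RotSeq n α)
    (hG : ∀ i, (G i).IsGraph) (hs : ∀ i, IsRotSeq (s i))
    (hdom : ∀ i, ∀ x ∈ s i, x.1 ∈ (G i).verts)
    (hGc : ∀ i j, Consistent (G i) (G j))
    (hsc : ∀ i j, SeqConsistent (s i) (s j))
    (hrot : ∀ i j, Consistent (applySeq (s i) (G i)) (applySeq (s j) (G j))) :
    ∃ t : RotSeq n α, IsRotSeq t ∧
      unionFam (fun i => applySeq (s i) (G i)) = applySeq t (unionFam G) := by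
  exact rotation_sequences_merge_general G s hG hs hGc hrot

end CDDM
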